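/- arXiv:0909.0922 — 2 statements merged into one kernel-verified Lean document; each statement's English description precedes it below -/
import Mathlib

section
/- Turán's theorem (Hardy–Ramanujan): (1/N)·#{n ≤ N : |ω(n) − log log N| ≥ t·√(log log N)} ≤ (1 + O(1/√(log log N)))/t² for every t ≥ 1, with implied constant independent of t. -/
open Finset

lemma prod_log_fact (N : ℕ) : Real.log (N.factorial : ℝ) =
    ∑ p ∈ Nat.primesLE N, (padicValNat p N.factorial : ℝ) * Real.log p := by
  rw [Real.log_nat_eq_sum_factorization, Finsupp.sum]
  apply Finset.sum_subset_zero_on_sdiff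
  · intro p hp
    have h1 := Nat.support_factorization N.factorial ▸ hp
    have h2 := Nat.prime_of_mem_primeFactors h1
    exact Nat.mem_primesLE.2 ⟨(h2.dvd_factorial).1 (Nat.dvd_of_mem_primeFactors h1), h2⟩
  · intro p hp
    have hp1 := (Finset.mem_sdiff.1 hp)
    have h2 := (Nat.mem_primesLE.1 hp1.1).2
    have : N.factorial.factorization p = 0 := Finsupp.notMem_support_iff.1 hp1.2
    rw [← Nat.factorization_def _ h2, this]; simp
  · intro p hp
    have h1 := Nat.support_factorization N.factorial ▸ hp
    rw [← Nat.factorization_def _ (Nat.prime_of_mem_primeFactors h1)]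

lemma val_lower (N p : ℕ) (hp : p.Prime) : (N : ℝ) / p - 1 ≤ padicValNat p N.factorial := by
  have h : N / p ≤ padicValNat p N.factorial := by
    rw [← Nat.factorization_def _ hp, Nat.factorization_factorial hp (b := Nat.log p N + 2) (by omega)]
    have := Finset.single_le_sum (f := fun i => N / p ^ i) (s := Ico 1 (Nat.log p N + 2))
      (fun i _ => Nat.zero_le _) (a := 1) (by simp)
    simpa using this
  have h2 : (N : ℝ) / p < (N / p : ℕ) + 1 := by
    have := Nat.lt_floor_add_one ((N : ℝ) / p)
    rwa [Nat.floor_div_natCast, Nat.floor_natCast] at this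
  have h3 : ((N / p : ℕ) : ℝ) ≤ padicValNat p N.factorial := by exact_mod_cast h
  linarith

lemma val_upper (N p : ℕ) (hp : p.Prime) :
    (padicValNat p N.factorial : ℝ) ≤ N / p + N / (p * (p - 1)) := by
  have := Fact.mk hp
  have h : (p - 1) * padicValNat p N.factorial ≤ N := by
    rw [sub_one_mul_padicValNat_factorial]; omega
  have h1 : ((p : ℝ) - 1) * padicValNat p N.factorial ≤ N := by
    have : (((p - 1) * padicValNat p N.factorial : ℕ) : ℝ) ≤ N := by exact_mod_cast h
    rwa [Nat.cast_mul, Nat.cast_sub hp.one_le, Nat.cast_one] at this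
  have hp2 : (2 : ℝ) ≤ p := by exact_mod_cast hp.two_le
  have h2 : (N : ℝ) / p + N / (p * (p - 1)) = N / (p - 1) := by
    have : (p : ℝ) - 1 ≠ 0 := by linarith
    field_simp; ring
  rw [h2, le_div_iff₀ (by linarith)]; linarith

/-- Telescoping bound. -/
lemma sum_log_bound (N : ℕ) (hN : 1 ≤ N) :
    ∑ n ∈ Icc 2 N, Real.log n / (n * ((n : ℝ) - 1)) ≤ 2 - (Real.log N + 2) / N := by
  induction N, hN using Nat.le_induction with
  | base => simp
  | succ n hn ih =>
    rw [Finset.sum_Icc_succ_top (by omega)]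
    have hn' : (1 : ℝ) ≤ n := by exact_mod_cast hn
    have h1 : Real.log ((n : ℝ) + 1) - Real.log n ≤ 1 / n := by
      rw [← Real.log_div (by positivity) (by positivity)]
      have := Real.log_le_sub_one_of_pos (x := ((n : ℝ) + 1) / n) (by positivity)
      calc _ ≤ _ := this
        _ = _ := by field_simp; ring
    have h1' : n * (Real.log ((n : ℝ) + 1) - Real.log n) ≤ 1 := by
      rw [le_div_iff₀ (by positivity)] at h1; linarith
    have h1'' : (Real.log ((n : ℝ) + 1) - Real.log n) ≤ 1 :=
      h1.trans (by rw [div_le_one (by positivity)]; exact hn')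
    push_cast
    have key : Real.log ((n : ℝ) + 1) / ((n + 1) * (n + 1 - 1)) ≤
        (Real.log n + 2) / n - (Real.log (n + 1) + 2) / (n + 1) := by
      rw [div_sub_div _ _ (by positivity) (by positivity), add_sub_cancel_right, mul_comm (n + 1 : ℝ)]
      apply div_le_div_of_nonneg_right _ (by positivity)
      nlinarith
    linarith

noncomputable def mertA (N : ℕ) : ℝ := ∑ p ∈ Nat.primesLE N, Real.log p / p
noncomputable def mertS (N : ℕ) : ℝ := ∑ p ∈ Nat.primesLE N, 1 / (p : ℝ)

lemma mertA_upper (N : ℕ) (hN : 1 ≤ N) : mertA N ≤ Real.log N + Real.log 4 := by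
  have hN' : (0 : ℝ) < N := by exact_mod_cast hN
  have h1 : Real.log (N.factorial : ℝ) ≤ N * Real.log N := by
    rw [← Real.log_pow]
    apply Real.log_le_log (by exact_mod_cast N.factorial_pos)
    exact_mod_cast N.factorial_le_pow
  have h2 : N * mertA N - Chebyshev.theta N ≤ Real.log (N.factorial : ℝ) := by
    rw [prod_log_fact, Chebyshev.theta_eq_sum_primesLE_log, mertA, mul_sum, ← sum_sub_distrib]
    apply sum_le_sum
    intro p hp
    have hp := (Nat.mem_primesLE.1 hp).2
    have := mul_le_mul_of_nonneg_right (val_lower N p hp) (Real.log_natCast_nonneg p)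
    calc _ = _ := by ring
      _ ≤ _ := this
  have h3 := Chebyshev.theta_le_log4_mul_x hN'.le
  have : N * mertA N ≤ N * (Real.log N + Real.log 4) := by linarith
  exact le_of_mul_le_mul_left this hN'

lemma mertA_lower (N : ℕ) (hN : 1 ≤ N) : Real.log N - 3 ≤ mertA N := by
  have hN' : (0 : ℝ) < N := by exact_mod_cast hN
  have h1 : N * Real.log N - N ≤ Real.log (N.factorial : ℝ) := by
    have := Stirling.le_log_factorial_stirling (n := N) (by omega)
    have h2 : 0 ≤ Real.log N := Real.log_natCast_nonneg N
    have h3 : 0 ≤ Real.log (2 * Real.pi) := Real.log_nonneg (by linarith [Real.pi_gt_three])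
    linarith
  have h2 : Real.log (N.factorial : ℝ) ≤ N * mertA N +
      N * ∑ p ∈ Nat.primesLE N, Real.log p / (p * ((p : ℝ) - 1)) := by
    rw [prod_log_fact, mertA, mul_sum, mul_sum, ← sum_add_distrib]
    apply sum_le_sum
    intro p hp
    have hp := (Nat.mem_primesLE.1 hp).2
    have := mul_le_mul_of_nonneg_right (val_upper N p hp) (Real.log_natCast_nonneg p)
    calc _ ≤ _ := this
      _ = _ := by ring
  have h3 : ∑ p ∈ Nat.primesLE N, Real.log p / (p * ((p : ℝ) - 1)) ≤ 2 := by
    calc _ ≤ ∑ n ∈ Icc 2 N, Real.log n / (n * ((n : ℝ) - 1)) := by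
          apply sum_le_sum_of_subset_of_nonneg
          · intro p hp
            have hp := (Nat.mem_primesLE.1 hp)
            exact mem_Icc.2 ⟨hp.2.two_le, hp.1⟩
          · intro n hn _
            have : (2 : ℝ) ≤ n := by exact_mod_cast (mem_Icc.1 hn).1
            have h2 : 0 ≤ Real.log n := Real.log_natCast_nonneg n
            have : 0 ≤ (n : ℝ) - 1 := by linarith
            positivity
      _ ≤ _ := sum_log_bound N hN
      _ ≤ 2 := by
        have h2 : 0 ≤ Real.log N := Real.log_natCast_nonneg N
        have : 0 ≤ (Real.log N + 2) / N := by positivity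
        linarith
  have : N * (Real.log N - 3) ≤ N * mertA N := by nlinarith
  exact le_of_mul_le_mul_left this hN'

lemma log4_le : Real.log 4 ≤ 2 := by
  rw [show (4 : ℝ) = 2 ^ 2 by norm_num, Real.log_pow]
  have := Real.log_two_lt_d9
  push_cast; linarith

lemma primesLE_succ_sum (f : ℕ → ℝ) (n : ℕ) : ∑ p ∈ Nat.primesLE (n + 1), f p =
    ∑ p ∈ Nat.primesLE n, f p + if (n + 1).Prime then f (n + 1) else 0 := by
  simp only [Nat.primesLE_eq_filter_Icc_zero, sum_filter]
  rw [Finset.sum_Icc_succ_top (by omega)]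

/-- the discrete Abel summation step -/
lemma step (n : ℕ) (hn : 2 ≤ n) :
    (mertS (n+1) - (mertA (n+1) - Real.log (n + 1)) / Real.log (n + 1)) -
    (mertS n - (mertA n - Real.log n) / Real.log n) =
    (Real.log (n+1) - Real.log n) / Real.log (n+1) +
      (mertA n - Real.log n) * (1 / Real.log n - 1 / Real.log (n+1)) := by
  have hn' : (2 : ℝ) ≤ n := by exact_mod_cast hn
  have hu : 0 < Real.log n := Real.log_pos (by linarith)
  have hv : 0 < Real.log (n + 1) := Real.log_pos (by linarith)
  have : mertS (n+1) - mertS n = (mertA (n+1) - mertA n) / Real.log (n+1) := by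
    simp only [mertS, mertA]
    rw [primesLE_succ_sum, primesLE_succ_sum]
    split_ifs
    · push_cast; field_simp; ring
    · simp
  rw [show mertS (n+1) = mertS n + (mertA (n+1) - mertA n) / Real.log (n+1) by linarith]
  field_simp; ring

lemma mertens_bound : ∃ c : ℝ, 0 < c ∧ ∀ N : ℕ, 2 ≤ N → |mertS N - Real.log (Real.log N)| ≤ c := by
  set T : ℕ → ℝ := fun n => mertS n - (mertA n - Real.log n) / Real.log n with hT
  have hD : ∀ n : ℕ, 1 ≤ n → |mertA n - Real.log n| ≤ 3 := by
    intro n hn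
    rw [abs_le]
    constructor <;> linarith [mertA_upper n hn, mertA_lower n hn, log4_le]
  have hmain : ∀ N : ℕ, 2 ≤ N →
      T N + 3 / Real.log N - Real.log (Real.log N) ≤ T 2 + 3 / Real.log 2 - Real.log (Real.log 2) ∧
      T 2 - 4 / Real.log 2 - Real.log (Real.log 2) ≤ T N - 4 / Real.log N - Real.log (Real.log N) := by
    intro N hN
    induction N, hN using Nat.le_induction with
    | base => simp
    | succ n hn ih =>
      have hn' : (2 : ℝ) ≤ n := by exact_mod_cast hn
      have hu : 0 < Real.log n := Real.log_pos (by linarith)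
      have huv : Real.log n ≤ Real.log (n + 1) := Real.log_le_log (by linarith) (by linarith)
      have hv : 0 < Real.log (n + 1) := Real.log_pos (by linarith)
      have hs := step n hn
      have hTs : T (n + 1) = mertS (n+1) - (mertA (n+1) - Real.log (n + 1)) / Real.log (n + 1) := by
        simp [hT]
      have hTn : T n = mertS n - (mertA n - Real.log n) / Real.log n := rfl
      rw [← hTs, ← hTn] at hs
      have hv1 : Real.log (n + 1) - Real.log n ≤ 1 := by
        rw [← Real.log_div (by positivity) (by positivity)]
        have := Real.log_le_sub_one_of_pos (x := ((n : ℝ) + 1) / n) (by positivity)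
        have h2 : ((n : ℝ) + 1) / n ≤ 2 := by rw [div_le_iff₀ (by positivity)]; linarith
        linarith
      have hd := abs_le.1 (hD n (by omega))
      push_cast
      generalize Real.log n = u at *
      generalize Real.log ((n : ℝ) + 1) = v at *
      have hinv : 0 ≤ 1 / u - 1 / v := by
        have := one_div_le_one_div_of_le hu huv
        linarith
      have l1 : (v - u) / v ≤ Real.log v - Real.log u := by
        rw [← Real.log_div hv.ne' hu.ne']
        have := Real.one_sub_inv_le_log_of_pos (x := v / u) (by positivity)
        calc _ = _ := by field_simp
          _ ≤ _ := this
      have l2 : Real.log v - Real.log u ≤ (v - u) / u := by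
        rw [← Real.log_div hv.ne' hu.ne']
        have := Real.log_le_sub_one_of_pos (x := v / u) (by positivity)
        calc _ ≤ _ := this
          _ = _ := by field_simp
      have l3 : (v - u) / u - (v - u) / v ≤ 1 / u - 1 / v := by
        have : (v - u) / u - (v - u) / v = (v - u) * (1 / u - 1 / v) := by ring
        rw [this]; nlinarith
      have e1 : 3 / v = 3 * (1 / v) := by ring
      have e2 : 3 / u = 3 * (1 / u) := by ring
      have e3 : 4 / v = 4 * (1 / v) := by ring
      have e4 : 4 / u = 4 * (1 / u) := by ring
      have m1 := mul_le_mul_of_nonneg_right hd.1 hinv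
      have m2 := mul_le_mul_of_nonneg_right hd.2 hinv
      rw [e2, e4] at ih
      rw [e1, e3]
      obtain ⟨i1, i2⟩ := ih
      constructor <;> linarith
  have h2 : 0 < Real.log 2 := Real.log_pos (by norm_num)
  refine ⟨|T 2 + 3 / Real.log 2 - Real.log (Real.log 2)| + |T 2 - 4 / Real.log 2 - Real.log (Real.log 2)|
    + 3 / Real.log 2, by positivity, ?_⟩
  intro N hN
  have hN' : (2 : ℝ) ≤ N := by exact_mod_cast hN
  have huv : Real.log 2 ≤ Real.log N := Real.log_le_log (by linarith) (by linarith)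
  have hu : 0 < Real.log N := by linarith
  obtain ⟨i1, i2⟩ := hmain N hN
  have hd : |(mertA N - Real.log N) / Real.log N| ≤ 3 / Real.log N := by
    rw [abs_div, abs_of_pos hu]
    exact div_le_div_of_nonneg_right (hD N (by omega)) hu.le
  have h3 : 3 / Real.log N ≤ 3 / Real.log 2 := div_le_div_of_nonneg_left (by norm_num) h2 huv
  have h4 : 0 < 4 / Real.log N := by positivity
  have hd := abs_le.1 hd
  have hTn : T N = mertS N - (mertA N - Real.log N) / Real.log N := rfl
  have a1 := le_abs_self (T 2 + 3 / Real.log 2 - Real.log (Real.log 2))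
  have a2 := neg_abs_le (T 2 - 4 / Real.log 2 - Real.log (Real.log 2))
  have a3 := abs_nonneg (T 2 + 3 / Real.log 2 - Real.log (Real.log 2))
  have a4 := abs_nonneg (T 2 - 4 / Real.log 2 - Real.log (Real.log 2))
  rw [abs_le]
  constructor <;> linarith

lemma pi_bound (N : ℕ) (hN : 16 ≤ N) :
    Real.log (Real.log N) * ((Nat.primesLE N).card : ℝ) ≤ 6 * N := by
  have hN' : (16 : ℝ) ≤ N := by exact_mod_cast hN
  have hl : 0 < Real.log N := Real.log_pos (by linarith)
  have hL : Real.log (Real.log N) ≤ Real.log N := Real.log_le_self hl.le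
  have h := Chebyshev.pi_le_log4_mul_div (x := (N : ℝ)) (by linarith)
  rw [Nat.floor_natCast, Real.log_sqrt (by linarith)] at h
  have hc : (Nat.primesLE N).card = Nat.primeCounting N := by simp
  rw [hc]
  have h5 : Real.log N * √(N : ℝ) ≤ 2 * N := by
    have h1 : Real.log √(N : ℝ) ≤ √(N : ℝ) := Real.log_le_self (by positivity)
    rw [Real.log_sqrt (by linarith)] at h1
    have := mul_le_mul_of_nonneg_right h1 (Real.sqrt_nonneg (N : ℝ))
    rw [Real.mul_self_sqrt (by linarith)] at this
    linarith
  calc _ ≤ Real.log N * (Nat.primeCounting N : ℝ) := mul_le_mul_of_nonneg_right hL (by positivity)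
    _ ≤ Real.log N * (Real.log 4 * N / (Real.log N / 2) + √(N : ℝ)) :=
        mul_le_mul_of_nonneg_left h hl.le
    _ = 2 * Real.log 4 * N + Real.log N * √(N : ℝ) := by field_simp
    _ ≤ _ := by nlinarith [log4_le]

lemma card_mult (N d : ℕ) : (((Icc 1 N).filter (fun n => d ∣ n)).card) = N / d := by
  exact Nat.Ioc_filter_dvd_card_eq_div N d

lemma omega_eq (N n : ℕ) (hn : n ∈ Icc 1 N) : (n.primeFactors.card : ℝ) =
    ∑ p ∈ Nat.primesLE N, if p ∣ n then (1 : ℝ) else 0 := by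
  rw [← Finset.sum_filter, Finset.sum_const, nsmul_eq_mul, mul_one]
  congr 2
  ext p
  have := mem_Icc.1 hn
  simp only [Nat.mem_primeFactors, mem_filter, Nat.mem_primesLE]
  constructor
  · rintro ⟨a, b, c⟩
    exact ⟨⟨(Nat.le_of_dvd (by omega) b).trans this.2, a⟩, b⟩
  · rintro ⟨⟨a, b⟩, c⟩
    exact ⟨b, c, by omega⟩

lemma sum_omega (N : ℕ) : ∑ n ∈ Icc 1 N, (n.primeFactors.card : ℝ) =
    ∑ p ∈ Nat.primesLE N, ((N / p : ℕ) : ℝ) := by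
  rw [sum_congr rfl (omega_eq N), sum_comm]
  apply sum_congr rfl
  intro p _
  rw [← Finset.sum_filter, Finset.sum_const, nsmul_eq_mul, mul_one, card_mult]

lemma sum_omega_lower (N : ℕ) : N * mertS N - (Nat.primesLE N).card ≤
    ∑ n ∈ Icc 1 N, (n.primeFactors.card : ℝ) := by
  rw [sum_omega, mertS, mul_sum, Finset.card_eq_sum_ones, Nat.cast_sum, ← sum_sub_distrib]
  apply sum_le_sum
  intro p _
  have := Nat.lt_floor_add_one ((N : ℝ) / p)
  rw [Nat.floor_div_natCast, Nat.floor_natCast] at this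
  rw [mul_one_div]; push_cast; linarith

lemma sum_omega_sq (N : ℕ) : ∑ n ∈ Icc 1 N, (n.primeFactors.card : ℝ) ^ 2 ≤
    N * mertS N ^ 2 + N * mertS N := by
  have h1 : ∑ n ∈ Icc 1 N, (n.primeFactors.card : ℝ) ^ 2 =
      ∑ p ∈ Nat.primesLE N, ∑ q ∈ Nat.primesLE N,
        ∑ n ∈ Icc 1 N, if p ∣ n ∧ q ∣ n then (1 : ℝ) else 0 := by
    rw [sum_congr rfl (fun n hn => by rw [omega_eq N n hn, sq, sum_mul_sum]), sum_comm]
    apply sum_congr rfl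
    intro p _
    rw [sum_comm]
    apply sum_congr rfl
    intro q _
    apply sum_congr rfl
    intro n _
    split_ifs <;> simp_all
  have h2 : ∀ p ∈ Nat.primesLE N, ∀ q ∈ Nat.primesLE N,
      (∑ n ∈ Icc 1 N, if p ∣ n ∧ q ∣ n then (1 : ℝ) else 0) ≤
        N * ((1 / p) * (1 / q)) + if p = q then N * (1 / (p : ℝ)) else 0 := by
    intro p hp q hq
    have hp := (Nat.mem_primesLE.1 hp).2
    have hq := (Nat.mem_primesLE.1 hq).2
    split_ifs with hpq
    · subst hpq
      simp only [and_self]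
      rw [← Finset.sum_filter, Finset.sum_const, nsmul_eq_mul, mul_one, card_mult]
      have : ((N / p : ℕ) : ℝ) ≤ N / p := Nat.cast_div_le
      have h0 : (0 : ℝ) ≤ N * ((1 / p) * (1 / p)) := by positivity
      have h3 : (N : ℝ) * (1 / p) = N / p := mul_one_div _ _
      linarith
    · have hc : Nat.Coprime p q := (Nat.coprime_primes hp hq).2 hpq
      have : ∀ n, (p ∣ n ∧ q ∣ n) ↔ p * q ∣ n := fun n =>
        ⟨fun h => hc.mul_dvd_of_dvd_of_dvd h.1 h.2,
          fun h => ⟨(Dvd.intro _ rfl).trans h, (Dvd.intro_left _ rfl).trans h⟩⟩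
      simp only [this]
      rw [← Finset.sum_filter, Finset.sum_const, nsmul_eq_mul, mul_one, card_mult]
      have : ((N / (p * q) : ℕ) : ℝ) ≤ N / (p * q : ℕ) := Nat.cast_div_le
      calc _ ≤ _ := this
        _ = _ := by push_cast; field_simp; ring
  rw [h1]
  calc _ ≤ ∑ p ∈ Nat.primesLE N, ∑ q ∈ Nat.primesLE N,
        (N * ((1 / (p : ℝ)) * (1 / (q : ℝ))) + if p = q then N * (1 / (p : ℝ)) else 0) :=
      sum_le_sum fun p hp => sum_le_sum fun q hq => h2 p hp q hq
    _ = _ := by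
      simp only [sum_add_distrib, mertS]
      congr 1
      · rw [sq, sum_mul_sum, mul_sum]
        simp only [mul_sum]
      · rw [mul_sum]
        apply sum_congr rfl
        intro p hp
        rw [Finset.sum_ite_eq, if_pos hp]

theorem turan_hardy_ramanujan :
    ∃ C : ℝ, 0 < C ∧ ∀ N : ℕ, 16 ≤ N → ∀ t : ℝ, 1 ≤ t →
      (((Finset.Icc 1 N).filter (fun n =>
          t * Real.sqrt (Real.log (Real.log N)) ≤
            |(n.primeFactors.card : ℝ) - Real.log (Real.log N)|)).card : ℝ) / N
        ≤ (1 + C / Real.sqrt (Real.log (Real.log N))) / t ^ 2 := by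
  obtain ⟨c, hc, hM⟩ := mertens_bound
  refine ⟨c ^ 2 + c + 12, by positivity, ?_⟩
  intro N hN t ht
  have hM := abs_le.1 (hM N (by omega))
  have hpi := pi_bound N hN
  have hN' : (16 : ℝ) ≤ N := by exact_mod_cast hN
  have hl : Real.exp 1 < Real.log N := by
    have h1 : Real.log 16 ≤ Real.log N := Real.log_le_log (by norm_num) hN'
    rw [show (16 : ℝ) = 2 ^ 4 by norm_num, Real.log_pow] at h1
    have := Real.log_two_gt_d9
    have := Real.exp_one_lt_d9
    push_cast at h1
    linarith
  have hL : 1 < Real.log (Real.log N) := by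
    rwa [Real.lt_log_iff_exp_lt (by linarith [Real.exp_pos 1])]
  set L := Real.log (Real.log N) with hLdef
  have hvar : ∑ n ∈ Icc 1 N, ((n.primeFactors.card : ℝ) - L) ^ 2 ≤
      N * (L + (c ^ 2 + c + 12)) := by
    have e : ∑ n ∈ Icc 1 N, ((n.primeFactors.card : ℝ) - L) ^ 2 =
        ∑ n ∈ Icc 1 N, (n.primeFactors.card : ℝ) ^ 2
          - 2 * L * ∑ n ∈ Icc 1 N, (n.primeFactors.card : ℝ) + N * L ^ 2 := by
      rw [mul_sum, ← sum_sub_distrib]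
      have : (N : ℝ) * L ^ 2 = ∑ n ∈ Icc 1 N, L ^ 2 := by simp
      rw [this, ← sum_add_distrib]
      exact sum_congr rfl fun n _ => by ring
    rw [e]
    have h1 := sum_omega_sq N
    have h2 := mul_le_mul_of_nonneg_left (sum_omega_lower N) (show 0 ≤ 2 * L by linarith)
    have h3 : (mertS N - L) ^ 2 ≤ c ^ 2 := sq_le_sq' (by linarith) (by linarith)
    have h4 : mertS N ≤ L + c := by linarith
    have h5 := mul_le_mul_of_nonneg_left h3 (show (0 : ℝ) ≤ N by linarith)
    have h6 := mul_le_mul_of_nonneg_left h4 (show (0 : ℝ) ≤ N by linarith)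
    nlinarith
  have hcheb : ((((Finset.Icc 1 N).filter (fun n => t * Real.sqrt L ≤
            |(n.primeFactors.card : ℝ) - L|)).card : ℝ)) * (t ^ 2 * L) ≤
      ∑ n ∈ Icc 1 N, ((n.primeFactors.card : ℝ) - L) ^ 2 := by
    rw [← nsmul_eq_mul, ← Finset.sum_const]
    calc _ ≤ ∑ n ∈ (Finset.Icc 1 N).filter (fun n => t * Real.sqrt L ≤
            |(n.primeFactors.card : ℝ) - L|), ((n.primeFactors.card : ℝ) - L) ^ 2 := by
          apply sum_le_sum
          intro n hn
          have h := (mem_filter.1 hn).2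
          have h2 := pow_le_pow_left₀ (by positivity) h 2
          rwa [sq_abs, mul_pow, Real.sq_sqrt (by linarith)] at h2
      _ ≤ _ := sum_le_sum_of_subset_of_nonneg (filter_subset _ _) (fun _ _ _ => sq_nonneg _)
  have hL0 : (0 : ℝ) < L := by linarith
  have hLs : (c ^ 2 + c + 12) / L ≤ (c ^ 2 + c + 12) / √L := by
    apply div_le_div_of_nonneg_left (by positivity) (by positivity)
    exact (Real.sqrt_le_left hL0.le).2 (by nlinarith)
  have hN0 : (0 : ℝ) < N := by linarith
  have hL0 : (0 : ℝ) < L := by linarith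
  calc _ ≤ (1 + (c ^ 2 + c + 12) / L) / t ^ 2 := by
        have e : (1 + (c ^ 2 + c + 12) / L) / t ^ 2 = (N * (L + (c ^ 2 + c + 12))) / (t ^ 2 * L) / N := by
          field_simp
        rw [e]
        apply div_le_div_of_nonneg_right _ hN0.le
        rw [le_div_iff₀ (by positivity)]
        exact hcheb.trans hvar
    _ ≤ _ := by gcongr
end

section
/- Second-moment estimate: Σ_{n≤N} (ω(n) − log log N)² = O(N log log N) for N ≥ 16. -/
open Finset

namespace OmegaMoment

/-- Primes up to `n`. -/
def P (n : ℕ) : Finset ℕ := (Ioc 0 n).filter Nat.Prime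

/-- The sum of `log p / p` over primes up to `n`. -/
noncomputable def A (n : ℕ) : ℝ := ∑ p ∈ P n, Real.log p / p

/-- The sum of `1 / p` over primes up to `n`. -/
noncomputable def S (n : ℕ) : ℝ := ∑ p ∈ P n, (1 : ℝ) / p

lemma mem_P {n p : ℕ} : p ∈ P n ↔ p ≤ n ∧ p.Prime := by
  simp only [P, mem_filter, mem_Ioc]
  exact ⟨fun h => ⟨h.1.2, h.2⟩, fun h => ⟨⟨h.2.pos, h.1⟩, h.2⟩⟩

lemma log_factorial_eq (n : ℕ) :
    Real.log (n.factorial : ℝ) = ∑ p ∈ P n, (n.factorial.factorization p : ℝ) * Real.log p := by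
  rw [Real.log_nat_eq_sum_factorization]
  apply Finsupp.sum_of_support_subset
  · intro p hp
    rw [Nat.support_factorization, Nat.mem_primeFactors] at hp
    exact mem_P.2 ⟨(hp.1.dvd_factorial).1 hp.2.1, hp.1⟩
  · simp

lemma A_upper (n : ℕ) (hn : 1 ≤ n) : A n ≤ Real.log n + Real.log 4 := by
  have hn0 : (0 : ℝ) < n := by exact_mod_cast hn
  have h1 : (n : ℝ) * A n ≤ Real.log (n.factorial : ℝ) + Chebyshev.theta n := by
    rw [log_factorial_eq, Chebyshev.theta, Nat.floor_natCast, A, mul_sum]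
    change _ ≤ _ + ∑ p ∈ P n, _
    rw [← sum_add_distrib]
    apply sum_le_sum
    intro p hp
    obtain ⟨hpn, hp⟩ := mem_P.1 hp
    have hp0 : (0 : ℝ) < p := by exact_mod_cast hp.pos
    have hl : 0 ≤ Real.log p := Real.log_natCast_nonneg p
    have hv : n / p ≤ n.factorial.factorization p := by
      rw [Nat.factorization_factorial hp (b := Nat.log p n + 2) (by omega)]
      have := single_le_sum (f := fun i => n / p ^ i) (s := Ico 1 (Nat.log p n + 2))
        (fun i _ => Nat.zero_le _) (a := 1) (by simp)
      simpa using this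
    have hd : (n : ℝ) / p ≤ (n.factorial.factorization p : ℝ) + 1 := by
      rw [div_le_iff₀ hp0]
      have h2 : n < n / p * p + p := Nat.lt_div_mul_add hp.pos
      have h3 : n ≤ (n.factorial.factorization p + 1) * p := by
        nlinarith [Nat.mul_le_mul_right p hv]
      exact_mod_cast h3
    calc (n : ℝ) * (Real.log p / p) = (n : ℝ) / p * Real.log p := by ring
      _ ≤ ((n.factorial.factorization p : ℝ) + 1) * Real.log p := by gcongr
      _ = _ := by ring
  have h2 : Real.log (n.factorial : ℝ) ≤ n * Real.log n := by
    rw [← Real.log_pow]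
    apply Real.log_le_log
    · exact_mod_cast Nat.factorial_pos n
    · exact_mod_cast Nat.factorial_le_pow n
  have h3 := Chebyshev.theta_le_log4_mul_x hn0.le
  have : (n : ℝ) * A n ≤ n * (Real.log n + Real.log 4) := by linarith
  exact le_of_mul_le_mul_left this hn0

lemma A_lower : ∃ D : ℝ, 0 ≤ D ∧ ∀ n : ℕ, 1 ≤ n → Real.log n - D ≤ A n := by
  have hs : Summable (fun n : ℕ => 4 * ((n : ℝ) ^ (3 / 2 : ℝ))⁻¹) :=
    (Real.summable_nat_rpow_inv.2 (by norm_num)).mul_left 4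
  have hnn : ∀ n : ℕ, 0 ≤ 4 * ((n : ℝ) ^ (3 / 2 : ℝ))⁻¹ := fun n => by positivity
  refine ⟨1 + ∑' n : ℕ, 4 * ((n : ℝ) ^ (3 / 2 : ℝ))⁻¹, ?_, ?_⟩
  · have : 0 ≤ ∑' n : ℕ, 4 * ((n : ℝ) ^ (3 / 2 : ℝ))⁻¹ := tsum_nonneg hnn
    linarith
  intro n hn
  have hn0 : (0 : ℝ) < n := by exact_mod_cast hn
  have h1 : Real.log (n.factorial : ℝ) ≤
      n * (A n + ∑ p ∈ P n, 4 * ((p : ℝ) ^ (3 / 2 : ℝ))⁻¹) := by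
    rw [log_factorial_eq, A, ← sum_add_distrib, mul_sum]
    apply sum_le_sum
    intro p hp
    obtain ⟨hpn, hp⟩ := mem_P.1 hp
    have hp0 : (0 : ℝ) < p := by exact_mod_cast hp.pos
    have hp2 : (2 : ℝ) ≤ p := by exact_mod_cast hp.two_le
    have hl : 0 ≤ Real.log p := Real.log_natCast_nonneg p
    have hv : (n.factorial.factorization p : ℝ) ≤ n / (p - 1) := by
      have h := Nat.factorization_factorial_le_div_pred hp n
      have h' : (n.factorial.factorization p : ℝ) ≤ ((n / (p - 1) : ℕ) : ℝ) := by
        exact_mod_cast h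
      refine h'.trans (Nat.cast_div_le.trans ?_)
      rw [Nat.cast_sub hp.one_le, Nat.cast_one]
    have hlog : Real.log p ≤ 2 * (p : ℝ) ^ (1 / 2 : ℝ) := by
      have := Real.log_le_rpow_div hp0.le (ε := 1 / 2) (by norm_num)
      linarith
    have hmul : (p : ℝ) ^ (1 / 2 : ℝ) * (p : ℝ) ^ (3 / 2 : ℝ) = p ^ 2 := by
      rw [← Real.rpow_add hp0]; norm_num
    have hq : 0 < (p : ℝ) ^ (3 / 2 : ℝ) := by positivity
    have key : Real.log p / (p * (p - 1)) ≤ 4 * ((p : ℝ) ^ (3 / 2 : ℝ))⁻¹ := by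
      rw [← div_eq_mul_inv, div_le_div_iff₀ (by nlinarith) hq]
      calc Real.log p * (p : ℝ) ^ (3 / 2 : ℝ)
          ≤ 2 * (p : ℝ) ^ (1 / 2 : ℝ) * (p : ℝ) ^ (3 / 2 : ℝ) := by gcongr
        _ = 2 * p ^ 2 := by rw [mul_assoc, hmul]
        _ ≤ _ := by nlinarith
    calc (n.factorial.factorization p : ℝ) * Real.log p ≤ n / (p - 1) * Real.log p := by gcongr
      _ = n * (Real.log p / p + Real.log p / (p * (p - 1))) := by
          have : (p : ℝ) - 1 ≠ 0 := by linarith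
          field_simp
          ring
      _ ≤ _ := by gcongr
  have h2 := Stirling.le_log_factorial_stirling (n := n) (by omega)
  have h3 : 0 ≤ Real.log n := Real.log_natCast_nonneg n
  have h4 : 0 ≤ Real.log (2 * Real.pi) := Real.log_nonneg (by linarith [Real.pi_gt_three])
  have h5 := Summable.sum_le_tsum (P n) (fun i _ => hnn i) hs
  have h6 : (n : ℝ) * (Real.log n - 1) ≤
      n * (A n + ∑ p ∈ P n, 4 * ((p : ℝ) ^ (3 / 2 : ℝ))⁻¹) := by linarith
  have h7 := le_of_mul_le_mul_left h6 hn0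
  linarith

lemma sum_P_succ (f : ℕ → ℝ) (n : ℕ) :
    ∑ p ∈ P (n + 1), f p = ∑ p ∈ P n, f p + if (n + 1).Prime then f (n + 1) else 0 := by
  simp only [P, sum_filter]
  rw [sum_Ioc_succ_top (Nat.zero_le n)]

lemma P_two : P 2 = {2} := by decide

lemma T_step (n : ℕ) (hn : 2 ≤ n) :
    S (n + 1) - A (n + 1) / Real.log (n + 1 : ℕ) =
      S n - A n / Real.log n + A n * (1 / Real.log n - 1 / Real.log (n + 1 : ℕ)) := by
  have h1 : 0 < Real.log n := Real.log_pos (by exact_mod_cast hn)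
  have h2 : 0 < Real.log (n + 1 : ℕ) := Real.log_pos (by exact_mod_cast (by omega))
  have h3 : ((n + 1 : ℕ) : ℝ) ≠ 0 := by positivity
  rw [S, A, sum_P_succ, sum_P_succ, ← S, ← A]
  split_ifs
  · generalize ((n + 1 : ℕ) : ℝ) = m at *
    field_simp
    ring
  · ring

lemma mertens : ∃ M : ℝ, 0 ≤ M ∧ ∀ n : ℕ, 2 ≤ n → |S n - Real.log (Real.log n)| ≤ M := by
  obtain ⟨D, hD, hA⟩ := A_lower
  have l4 : 0 ≤ Real.log 4 := Real.log_nonneg (by norm_num)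
  obtain ⟨K, hK⟩ : ∃ K, K = D + 1 + Real.log 4 := ⟨_, rfl⟩
  have hK0 : 0 ≤ K := by linarith
  have up : ∀ n : ℕ, 2 ≤ n → A n ≤ Real.log n + K := fun n hn => by
    have := A_upper n (by omega)
    linarith
  have lo : ∀ n : ℕ, 2 ≤ n → Real.log (n + 1 : ℕ) - K ≤ A n := fun n hn => by
    have h := hA n (by omega)
    have hn0 : (2 : ℝ) ≤ n := by exact_mod_cast hn
    have : Real.log (n + 1 : ℕ) ≤ Real.log n + 1 := by
      rw [← Real.log_exp 1, ← Real.log_mul (by positivity) (by positivity)]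
      apply Real.log_le_log (by positivity)
      have := Real.add_one_le_exp 1
      push_cast
      nlinarith
    linarith
  have l2 : 0 < Real.log 2 := Real.log_pos (by norm_num)
  have T2 : S 2 - A 2 / Real.log (2 : ℕ) = 0 := by
    simp only [S, A, P_two, sum_singleton, Nat.cast_ofNat]
    field_simp
    ring
  have main : ∀ n : ℕ, 2 ≤ n →
      S n - A n / Real.log n ≤ Real.log (Real.log n) - Real.log (Real.log 2)
        + K * (1 / Real.log 2 - 1 / Real.log n) ∧
      Real.log (Real.log n) - Real.log (Real.log 2)
        - K * (1 / Real.log 2 - 1 / Real.log n) ≤ S n - A n / Real.log n := by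
    intro n hn
    induction n, hn using Nat.le_induction with
    | base => rw [T2]; simp
    | succ n hn ih =>
      rw [T_step n hn]
      have h1 : 0 < Real.log n := Real.log_pos (by exact_mod_cast hn)
      have h12 : Real.log n ≤ Real.log (n + 1 : ℕ) :=
        Real.log_le_log (by exact_mod_cast (by omega)) (by exact_mod_cast (by omega))
      have hu := up n hn
      have hl := lo n hn
      generalize Real.log (n + 1 : ℕ) = y at *
      generalize Real.log (n : ℝ) = x at *
      have hy : 0 < y := by linarith
      have hd : 0 ≤ 1 / x - 1 / y := sub_nonneg.2 (one_div_le_one_div_of_le h1 h12)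
      have e1 : Real.log (x / y) ≤ x / y - 1 := Real.log_le_sub_one_of_pos (by positivity)
      have e2 : Real.log (y / x) ≤ y / x - 1 := Real.log_le_sub_one_of_pos (by positivity)
      rw [Real.log_div (by positivity) (by positivity)] at e1 e2
      have f1 : A n * (1 / x - 1 / y) ≤ (x + K) * (1 / x - 1 / y) :=
        mul_le_mul_of_nonneg_right hu hd
      have f2 : (y - K) * (1 / x - 1 / y) ≤ A n * (1 / x - 1 / y) :=
        mul_le_mul_of_nonneg_right hl hd
      have g1 : (x + K) * (1 / x - 1 / y) = 1 - x / y + K * (1 / x - 1 / y) := by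
        field_simp
      have g2 : (y - K) * (1 / x - 1 / y) = y / x - 1 - K * (1 / x - 1 / y) := by
        field_simp
      constructor
      · linarith [ih.1]
      · linarith [ih.2]
  have c0 : Real.log (Real.log 2) ≤ 0 := by
    apply Real.log_nonpos l2.le
    have := Real.log_two_lt_d9
    linarith
  have kk : 0 ≤ K / Real.log 2 := by positivity
  refine ⟨K / Real.log 2 + 1 - Real.log (Real.log 2), by linarith, ?_⟩
  intro n hn
  obtain ⟨m1, m2⟩ := main n hn
  have h1 : 0 < Real.log n := Real.log_pos (by exact_mod_cast hn)
  have a0 : 0 ≤ A n / Real.log n := by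
    apply div_nonneg _ h1.le
    exact sum_nonneg fun p _ => div_nonneg (Real.log_natCast_nonneg p) (Nat.cast_nonneg p)
  have a1 : A n / Real.log n ≤ 1 + K * (1 / Real.log n) := by
    rw [div_le_iff₀ h1]
    have := up n hn
    field_simp
    linarith
  have a2 : 0 ≤ K * (1 / Real.log n) := by positivity
  have e : K * (1 / Real.log 2 - 1 / Real.log n) = K / Real.log 2 - K * (1 / Real.log n) := by ring
  rw [abs_le]
  constructor <;> linarith

lemma omega_eq (N n : ℕ) (hn : n ∈ Icc 1 N) :
    (n.primeFactors.card : ℝ) = ∑ p ∈ P N, if p ∣ n then (1 : ℝ) else 0 := by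
  rw [mem_Icc] at hn
  rw [sum_boole]
  congr 2
  ext p
  simp only [mem_filter, mem_P, Nat.mem_primeFactors]
  constructor
  · rintro ⟨h1, h2, h3⟩
    exact ⟨⟨(Nat.le_of_dvd (by omega) h2).trans hn.2, h1⟩, h2⟩
  · rintro ⟨⟨h1, h2⟩, h3⟩
    exact ⟨h2, h3, by omega⟩

lemma count_dvd (N d : ℕ) :
    ∑ n ∈ Icc 1 N, (if d ∣ n then (1 : ℝ) else 0) = ((N / d : ℕ) : ℝ) := by
  rw [sum_boole, ← Nat.Ioc_filter_dvd_card_eq_div]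
  rfl

lemma first_moment (N : ℕ) :
    N * S N - N ≤ ∑ n ∈ Icc 1 N, (n.primeFactors.card : ℝ) := by
  rw [sum_congr rfl (omega_eq N), sum_comm]
  simp_rw [count_dvd]
  have hc : ((P N).card : ℝ) ≤ N := by
    have : (P N).card ≤ (Ioc 0 N).card := card_filter_le _ _
    rw [Nat.card_Ioc] at this
    exact_mod_cast this
  have : N * S N - (P N).card ≤ ∑ p ∈ P N, ((N / p : ℕ) : ℝ) := by
    rw [S, mul_sum, card_eq_sum_ones, Nat.cast_sum, ← sum_sub_distrib]
    apply sum_le_sum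
    intro p hp
    have hp := (mem_P.1 hp).2
    have hp0 : (0 : ℝ) < p := by exact_mod_cast hp.pos
    have h2 : N < N / p * p + p := Nat.lt_div_mul_add hp.pos
    have h3 : (N : ℝ) ≤ (N / p : ℕ) * p + p := by exact_mod_cast h2.le
    have h4 : (N : ℝ) / p ≤ (N / p : ℕ) + 1 := by
      rw [div_le_iff₀ hp0]
      linarith
    rw [mul_one_div]
    push_cast at *
    linarith
  linarith

lemma second_moment (N : ℕ) :
    ∑ n ∈ Icc 1 N, (n.primeFactors.card : ℝ) ^ 2 ≤ N * (S N ^ 2 + S N) := by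
  have h1 : ∑ n ∈ Icc 1 N, (n.primeFactors.card : ℝ) ^ 2 =
      ∑ p ∈ P N, ∑ q ∈ P N, ∑ n ∈ Icc 1 N,
        (if p ∣ n then (1 : ℝ) else 0) * (if q ∣ n then (1 : ℝ) else 0) := by
    rw [sum_congr rfl (fun n hn => by rw [omega_eq N n hn, sq, sum_mul_sum]), sum_comm]
    apply sum_congr rfl
    intro p _
    rw [sum_comm]
  rw [h1]
  have h2 : N * (S N ^ 2 + S N) = ∑ p ∈ P N, ∑ q ∈ P N,
      ((N : ℝ) * (1 / p * (1 / q)) + if p = q then (N : ℝ) * (1 / p) else 0) := by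
    simp_rw [sum_add_distrib, sum_ite_eq, ← mul_sum]
    rw [sq, mul_add]
    congr 1
    · rw [S, sum_mul_sum]
      simp_rw [mul_sum]
    · rw [S, mul_sum]
      exact sum_congr rfl fun p hp => by rw [if_pos hp]
  rw [h2]
  apply sum_le_sum
  intro p hp
  apply sum_le_sum
  intro q hq
  have hp := (mem_P.1 hp).2
  have hq := (mem_P.1 hq).2
  by_cases hpq : p = q
  · subst hpq
    rw [if_pos rfl]
    have : ∑ n ∈ Icc 1 N, (if p ∣ n then (1 : ℝ) else 0) * (if p ∣ n then (1 : ℝ) else 0)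
        = ((N / p : ℕ) : ℝ) := by
      rw [← count_dvd]
      exact sum_congr rfl fun n _ => by split_ifs <;> simp
    rw [this]
    have h3 : ((N / p : ℕ) : ℝ) ≤ N / p := Nat.cast_div_le
    rw [mul_one_div (N : ℝ)]
    have : 0 ≤ (N : ℝ) * (1 / p * (1 / p)) := by positivity
    linarith
  · rw [if_neg hpq, add_zero]
    have : ∑ n ∈ Icc 1 N, (if p ∣ n then (1 : ℝ) else 0) * (if q ∣ n then (1 : ℝ) else 0)
        = ((N / (p * q) : ℕ) : ℝ) := by
      rw [← count_dvd]
      apply sum_congr rfl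
      intro n _
      have hc : Nat.Coprime p q := (Nat.coprime_primes hp hq).2 hpq
      have : p * q ∣ n ↔ p ∣ n ∧ q ∣ n :=
        ⟨fun h => ⟨(dvd_mul_right p q).trans h, (dvd_mul_left q p).trans h⟩,
          fun h => hc.mul_dvd_of_dvd_of_dvd h.1 h.2⟩
      simp only [this]
      split_ifs <;> simp_all
    rw [this]
    refine Nat.cast_div_le.trans (le_of_eq ?_)
    push_cast
    rw [one_div_mul_one_div, mul_one_div]

lemma one_le_loglog (N : ℕ) (hN : 16 ≤ N) : 1 ≤ Real.log (Real.log N) := by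
  have h16 : Real.log 16 = 4 * Real.log 2 := by
    rw [show (16 : ℝ) = 2 ^ 4 by norm_num, Real.log_pow]
    norm_num
  have h : Real.log 16 ≤ Real.log N := Real.log_le_log (by norm_num) (by exact_mod_cast hN)
  have h2 := Real.log_two_gt_d9
  have h3 := Real.exp_one_lt_d9
  rw [Real.le_log_iff_exp_le (by linarith)]
  linarith

end OmegaMoment

open OmegaMoment in
theorem omega_second_moment :
    ∃ C : ℝ, 0 < C ∧ ∀ N : ℕ, 16 ≤ N →
      ∑ n ∈ Finset.Icc 1 N, ((n.primeFactors.card : ℝ) - Real.log (Real.log N)) ^ 2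
        ≤ C * N * Real.log (Real.log N) := by
  obtain ⟨M, hM, hS⟩ := mertens
  refine ⟨M ^ 2 + M + 3, by positivity, ?_⟩
  intro N hN
  have hL := one_le_loglog N hN
  have hs := hS N (by omega)
  have m1 := first_moment N
  have m2 := second_moment N
  generalize Real.log (Real.log N) = L at *
  have e : ∑ n ∈ Finset.Icc 1 N, ((n.primeFactors.card : ℝ) - L) ^ 2 =
      ∑ n ∈ Icc 1 N, (n.primeFactors.card : ℝ) ^ 2
        - 2 * L * ∑ n ∈ Icc 1 N, (n.primeFactors.card : ℝ) + N * L ^ 2 := by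
    rw [mul_sum, ← sum_sub_distrib]
    have : (N : ℝ) * L ^ 2 = ∑ n ∈ Icc 1 N, L ^ 2 := by simp
    rw [this, ← sum_add_distrib]
    exact sum_congr rfl fun n _ => by ring
  rw [e]
  have h1 : 2 * L * (N * S N - N) ≤ 2 * L * ∑ n ∈ Icc 1 N, (n.primeFactors.card : ℝ) :=
    mul_le_mul_of_nonneg_left m1 (by linarith)
  have h2 : (S N - L) ^ 2 ≤ M ^ 2 := by
    rw [← sq_abs]
    gcongr
  have h3 : S N - L ≤ M := (le_abs_self _).trans hs
  have h4 : (S N - L) ^ 2 + S N + 2 * L ≤ (M ^ 2 + M + 3) * L := by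
    nlinarith [sq_nonneg M]
  have h5 : (N : ℝ) * ((S N - L) ^ 2 + S N + 2 * L) ≤ N * ((M ^ 2 + M + 3) * L) :=
    mul_le_mul_of_nonneg_left h4 (Nat.cast_nonneg N)
  linarith
end
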